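/- Let Λ = ℤ³ ⊆ ℝ³ and let X = Λ \ (2Λ ∪ (2Λ + (1,1,1))), i.e., X consists of all integer points having exactly one or exactly two odd coordinates. Then: (a) X is a Delone set with parameters r = 1/2 and R = 1, i.e., every open ball of radius 1/2 contains at most one point of X and every closed ball of radius 1 contains at least one point of X; (b) any two points of X are joined by a 1-chain in X; (c) the affine span of X is all of ℝ³; (d) for every x ∈ X the cluster C_x(1) has affine span of dimension exactly 2; (e) the group Sym(X) of isometries of ℝ³ mapping X onto X acts transitively on X. Hence X is a 1-bonded regular system with t = 1 < 2R = 2 all of whose 1-clusters have rank 2, although X has rank 3. -/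

import Mathlib

open Metric

/-- A Delone set in `ℝ^d` with parameters `r, R > 0`: every open ball of radius `r`
contains at most one point of `X` and every closed ball of radius `R` contains at
least one point of `X`. -/
def IsDeloneSet {d : ℕ} (X : Set (EuclideanSpace ℝ (Fin d))) (r R : ℝ) : Prop :=
  0 < r ∧ 0 < R ∧
    (∀ c : EuclideanSpace ℝ (Fin d), (X ∩ Metric.ball c r).Subsingleton) ∧
    (∀ c : EuclideanSpace ℝ (Fin d), (X ∩ Metric.closedBall c R).Nonempty)

/-- A `t`-chain in `X` joining `x` to `x'`: a finite sequence of points of `X`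
starting at `x`, ending at `x'`, with consecutive distances at most `t`. -/
def TChain {d : ℕ} (X : Set (EuclideanSpace ℝ (Fin d))) (t : ℝ)
    (x x' : EuclideanSpace ℝ (Fin d)) : Prop :=
  ∃ (m : ℕ) (c : ℕ → EuclideanSpace ℝ (Fin d)),
    c 0 = x ∧ c m = x' ∧ (∀ i ≤ m, c i ∈ X) ∧
    ∀ i < m, dist (c i) (c (i + 1)) ≤ t

/-- `X` is uniformly discrete: some open ball radius `r > 0` so that every open
ball of radius `r` contains at most one point of `X`. -/
def UniformlyDiscrete {d : ℕ} (X : Set (EuclideanSpace ℝ (Fin d))) : Prop :=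
  ∃ r > 0, ∀ c : EuclideanSpace ℝ (Fin d), (X ∩ Metric.ball c r).Subsingleton

/-- `X` is a `t`-bonded set: uniformly discrete, full affine span, and any two
points of `X` are joined by a `t`-chain in `X`. -/
def TBonded {d : ℕ} (X : Set (EuclideanSpace ℝ (Fin d))) (t : ℝ) : Prop :=
  UniformlyDiscrete X ∧ affineSpan ℝ X = ⊤ ∧
    ∀ x ∈ X, ∀ x' ∈ X, TChain X t x x'

/-- The `ρ`-cluster of `X` centered at `x`: points of `X` at distance at most `ρ` from `x`. -/
def cluster {d : ℕ} (X : Set (EuclideanSpace ℝ (Fin d)))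
    (x : EuclideanSpace ℝ (Fin d)) (ρ : ℝ) : Set (EuclideanSpace ℝ (Fin d)) :=
  X ∩ Metric.closedBall x ρ

/-- The symmetry group `S_x(ρ)` of the cluster `C_x(ρ)`: isometries of `ℝ^d`
fixing `x` and mapping the cluster onto itself. -/
def symmGroup {d : ℕ} (X : Set (EuclideanSpace ℝ (Fin d)))
    (x : EuclideanSpace ℝ (Fin d)) (ρ : ℝ) :
    Set (EuclideanSpace ℝ (Fin d) ≃ᵢ EuclideanSpace ℝ (Fin d)) :=
  {s | s x = x ∧ s '' cluster X x ρ = cluster X x ρ}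

/-- `Sym(X)`: the isometries of `ℝ^d` mapping `X` onto `X`. -/
def SymX {d : ℕ} (X : Set (EuclideanSpace ℝ (Fin d))) :
    Set (EuclideanSpace ℝ (Fin d) ≃ᵢ EuclideanSpace ℝ (Fin d)) :=
  {g | g '' X = X}

/-- Equivalence of the clusters `C_x(ρ)` and `C_{x'}(ρ)`: some isometry of `ℝ^d`
sends `x` to `x'` and `C_x(ρ)` onto `C_{x'}(ρ)`. -/
def ClusterEquiv {d : ℕ} (X : Set (EuclideanSpace ℝ (Fin d))) (ρ : ℝ)
    (x x' : EuclideanSpace ℝ (Fin d)) : Prop :=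
  ∃ g : EuclideanSpace ℝ (Fin d) ≃ᵢ EuclideanSpace ℝ (Fin d),
    g x = x' ∧ g '' cluster X x ρ = cluster X x' ρ

/-- The rank of the cluster `C_x(ρ)`: the dimension of its affine span. -/
noncomputable def clusterRank {d : ℕ} (X : Set (EuclideanSpace ℝ (Fin d)))
    (x : EuclideanSpace ℝ (Fin d)) (ρ : ℝ) : ℕ :=
  Module.finrank ℝ (affineSpan ℝ (cluster X x ρ)).direction

/-- The lattice `ℤ³` inside `ℝ³`. -/
def intLattice : Set (EuclideanSpace ℝ (Fin 3)) :=
  {v | ∀ i, ∃ n : ℤ, v i = (n : ℝ)}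

/-- The sublattice `2ℤ³`: points with all coordinates even integers. -/
def evenLattice : Set (EuclideanSpace ℝ (Fin 3)) :=
  {v | ∀ i, ∃ n : ℤ, v i = 2 * (n : ℝ)}

/-- The translate `2ℤ³ + (1,1,1)`: points with all coordinates odd integers. -/
def oddLattice : Set (EuclideanSpace ℝ (Fin 3)) :=
  {v | ∀ i, ∃ n : ℤ, v i = 2 * (n : ℝ) + 1}

/-- `X = ℤ³ \ (2ℤ³ ∪ (2ℤ³ + (1,1,1)))`: integer points with exactly one or exactly
two odd coordinates. -/
def X3 : Set (EuclideanSpace ℝ (Fin 3)) :=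
  intLattice \ (evenLattice ∪ oddLattice)

namespace X3aux

abbrev E := EuclideanSpace ℝ (Fin 3)

noncomputable def P (a b c : ℤ) : E := !₂[(a:ℝ), (b:ℝ), (c:ℝ)]

def Good (a b c : ℤ) : Prop := ¬ (a % 2 = b % 2 ∧ b % 2 = c % 2)

lemma ext3 {x y : E} (h0 : x 0 = y 0) (h1 : x 1 = y 1) (h2 : x 2 = y 2) : x = y := by
  ext i; fin_cases i <;> assumption

@[simp] lemma P0 (a b c : ℤ) : P a b c 0 = a := rfl
@[simp] lemma P1 (a b c : ℤ) : P a b c 1 = b := rfl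
@[simp] lemma P2 (a b c : ℤ) : P a b c 2 = c := rfl

lemma P_mem {a b c : ℤ} : P a b c ∈ X3 ↔ Good a b c := by
  have he : P a b c ∈ evenLattice ↔ (a % 2 = 0 ∧ b % 2 = 0 ∧ c % 2 = 0) := by
    simp only [evenLattice, Set.mem_setOf_eq, Fin.forall_fin_succ, Fin.succ_zero_eq_one,
      Fin.succ_one_eq_two, P0, P1, P2, IsEmpty.forall_iff, and_true]
    norm_cast
    constructor
    · rintro ⟨⟨x, hx⟩, ⟨y, hy⟩, ⟨z, hz⟩⟩; omega
    · rintro ⟨h0, h1, h2⟩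
      exact ⟨⟨a / 2, by omega⟩, ⟨b / 2, by omega⟩, ⟨c / 2, by omega⟩⟩
  have ho : P a b c ∈ oddLattice ↔ (a % 2 = 1 ∧ b % 2 = 1 ∧ c % 2 = 1) := by
    simp only [oddLattice, Set.mem_setOf_eq, Fin.forall_fin_succ, Fin.succ_zero_eq_one,
      Fin.succ_one_eq_two, P0, P1, P2, IsEmpty.forall_iff, and_true]
    norm_cast
    constructor
    · rintro ⟨⟨x, hx⟩, ⟨y, hy⟩, ⟨z, hz⟩⟩; omega
    · rintro ⟨h0, h1, h2⟩
      exact ⟨⟨a / 2, by omega⟩, ⟨b / 2, by omega⟩, ⟨c / 2, by omega⟩⟩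
  have hi : P a b c ∈ intLattice := by
    intro i
    fin_cases i
    · exact ⟨a, rfl⟩
    · exact ⟨b, rfl⟩
    · exact ⟨c, rfl⟩
  unfold X3 Good
  rw [Set.mem_diff, Set.mem_union, he, ho]
  simp only [hi, true_and]
  omega

lemma exists_P {x : E} (hx : x ∈ X3) : ∃ a b c, x = P a b c ∧ Good a b c := by
  obtain ⟨a, ha⟩ := hx.1 0
  obtain ⟨b, hb⟩ := hx.1 1
  obtain ⟨c, hc⟩ := hx.1 2
  have : x = P a b c := ext3 ha hb hc
  exact ⟨a, b, c, this, P_mem.1 (this ▸ hx)⟩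

lemma dist_le_one (x y : E) :
    dist x y ≤ 1 ↔ (x 0 - y 0)^2 + (x 1 - y 1)^2 + (x 2 - y 2)^2 ≤ 1 := by
  rw [EuclideanSpace.dist_eq, Real.sqrt_le_one, Fin.sum_univ_three]
  simp [Real.dist_eq, sq_abs]

lemma dist_lt_one (x y : E) :
    dist x y < 1 ↔ (x 0 - y 0)^2 + (x 1 - y 1)^2 + (x 2 - y 2)^2 < 1 := by
  rw [EuclideanSpace.dist_eq, Real.sqrt_lt' one_pos, Fin.sum_univ_three]
  simp [Real.dist_eq, sq_abs]

/-! Delone -/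

lemma near (x : ℝ) : ∃ (n m : ℤ) (t : ℝ), n % 2 ≠ m % 2 ∧ 0 ≤ t ∧ t ≤ 1/2 ∧
    (n - x)^2 = t^2 ∧ (m - x)^2 = (1 - t)^2 := by
  have h1 := Int.floor_le x
  have h2 := Int.lt_floor_add_one x
  by_cases h : x - ⌊x⌋ ≤ 1/2
  · refine ⟨⌊x⌋, ⌊x⌋ + 1, x - ⌊x⌋, by omega, by linarith, h, by ring, by push_cast; ring⟩
  · refine ⟨⌊x⌋ + 1, ⌊x⌋, 1 - (x - ⌊x⌋), by omega, by linarith, by linarith,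
      by push_cast; ring, by ring⟩

lemma flip_le {s t u : ℝ} (ht0 : 0 ≤ t) (hu0 : 0 ≤ u) (hs : s ≤ 1/2) (ht : t ≤ s) (hu : u ≤ s) :
    (1 - s)^2 + t^2 + u^2 ≤ 1 := by
  have h1 := pow_le_pow_left₀ ht0 ht 2
  have h2 := pow_le_pow_left₀ hu0 hu 2
  have h3 : s * s ≤ s * (1/2) := mul_le_mul_of_nonneg_left hs (ht0.trans ht)
  nlinarith

lemma delone : IsDeloneSet X3 (1 / 2) 1 := by
  refine ⟨by norm_num, by norm_num, ?_, ?_⟩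
  · rintro c x ⟨hx, hxc⟩ y ⟨hy, hyc⟩
    have hd : dist x y < 1 := by
      have := dist_triangle_right x y c
      rw [Metric.mem_ball] at hxc hyc
      linarith
    obtain ⟨a, b, c, rfl, -⟩ := exists_P hx
    obtain ⟨a', b', c', rfl, -⟩ := exists_P hy
    rw [dist_lt_one] at hd
    simp only [P0, P1, P2] at hd
    norm_cast at hd
    have key : ∀ u v : ℤ, (u - v)^2 < 1 → u = v := by
      intro u v h
      have := (sq_lt_one_iff_abs_lt_one _).1 h
      rw [Int.abs_lt_one_iff] at this
      omega
    have q0 := sq_nonneg (a - a')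
    have q1 := sq_nonneg (b - b')
    have q2 := sq_nonneg (c - c')
    rw [key a a' (by linarith), key b b' (by linarith), key c c' (by linarith)]
  · intro x
    obtain ⟨a, a', s, ha, hs0, hs, ha1, ha2⟩ := near (x 0)
    obtain ⟨b, b', t, hb, ht0, ht, hb1, hb2⟩ := near (x 1)
    obtain ⟨c, c', u, hc, hu0, hu, hc1, hc2⟩ := near (x 2)
    have mk : ∀ p q r : ℤ, Good p q r →
        ((p:ℝ) - x 0)^2 + (q - x 1)^2 + (r - x 2)^2 ≤ 1 →
        (X3 ∩ Metric.closedBall x 1).Nonempty := by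
      intro p q r hg h
      exact ⟨P p q r, P_mem.2 hg, by rw [Metric.mem_closedBall, dist_le_one]; simpa using h⟩
    by_cases hg : Good a b c
    · apply mk a b c hg
      rw [ha1, hb1, hc1]; nlinarith
    · unfold Good at hg mk
      have f0 : t ≤ s → u ≤ s → (X3 ∩ Metric.closedBall x 1).Nonempty := fun h1 h2 => by
        apply mk a' b c (by omega)
        rw [ha2, hb1, hc1]; exact flip_le ht0 hu0 hs h1 h2
      have f1 : s ≤ t → u ≤ t → (X3 ∩ Metric.closedBall x 1).Nonempty := fun h1 h2 => by
        apply mk a b' c (by omega)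
        rw [ha1, hb2, hc1]; have := flip_le hs0 hu0 ht h1 h2; linarith
      have f2 : s ≤ u → t ≤ u → (X3 ∩ Metric.closedBall x 1).Nonempty := fun h1 h2 => by
        apply mk a b c' (by omega)
        rw [ha1, hb1, hc2]; have := flip_le hs0 ht0 hu h1 h2; linarith
      rcases le_total s t with h1 | h1 <;> rcases le_total t u with h2 | h2 <;>
        rcases le_total s u with h3 | h3 <;>
        first
        | exact f0 (by linarith) (by linarith)
        | exact f1 (by linarith) (by linarith)
        | exact f2 (by linarith) (by linarith)

/-! Chains -/

lemma TChain.trans {x y z : E} (h : TChain X3 1 x y) (h' : TChain X3 1 y z) :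
    TChain X3 1 x z := by
  obtain ⟨m, c, h0, h1, h2, h3⟩ := h
  obtain ⟨m', c', h0', h1', h2', h3'⟩ := h'
  refine ⟨m + m', fun i => if i ≤ m then c i else c' (i - m), by simp [h0], ?_, ?_, ?_⟩
  · by_cases hm : m' = 0
    · subst hm; simp [h1, ← h1', h0']
    · simp [hm, h1']
  · intro i hi
    dsimp only
    split_ifs with h
    · exact h2 i h
    · exact h2' _ (by omega)
  · intro i hi
    dsimp only
    rcases lt_trichotomy i m with h | h | h
    · rw [if_pos h.le, if_pos (by omega)]; exact h3 i h
    · subst h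
      rw [if_pos le_rfl, if_neg (by omega), h1, ← h0']
      simpa using h3' 0 (by omega)
    · rw [if_neg (by omega), if_neg (by omega), show i + 1 - m = (i - m) + 1 by omega]
      exact h3' _ (by omega)

lemma TChain.symm {x y : E} (h : TChain X3 1 x y) : TChain X3 1 y x := by
  obtain ⟨m, c, h0, h1, h2, h3⟩ := h
  refine ⟨m, fun i => c (m - i), by simp [h1], by simp [h0], fun i hi => h2 _ (by omega), ?_⟩
  intro i hi
  dsimp only
  have := h3 (m - (i + 1)) (by omega)
  rw [show m - (i + 1) + 1 = m - i by omega] at this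
  rwa [dist_comm]

lemma TChain.step {x y : E} (hx : x ∈ X3) (hy : y ∈ X3) (h : dist x y ≤ 1) :
    TChain X3 1 x y := by
  refine ⟨1, fun i => if i = 0 then x else y, by simp, by simp, ?_, ?_⟩
  · intro i _
    dsimp only
    split_ifs <;> assumption
  · intro i hi
    obtain rfl : i = 0 := by omega
    simpa using h

def J (a b c a' b' c' : ℤ) : Prop := TChain X3 1 (P a b c) (P a' b' c')

lemma J.trans {a b c a' b' c' p q r : ℤ} (h : J a b c a' b' c') (h' : J a' b' c' p q r) :
    J a b c p q r := TChain.trans h h'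
lemma J.symm {a b c a' b' c' : ℤ} (h : J a b c a' b' c') : J a' b' c' a b c :=
  TChain.symm h

lemma J.refl {a b c : ℤ} (h : Good a b c) : J a b c a b c :=
  TChain.step (P_mem.2 h) (P_mem.2 h) (by simp)

lemma s0 {a b c : ℤ} (h : Good a b c) (h' : Good (a+1) b c) : J a b c (a+1) b c :=
  TChain.step (P_mem.2 h) (P_mem.2 h') (by rw [dist_le_one]; simp)
lemma s1 {a b c : ℤ} (h : Good a b c) (h' : Good a (b+1) c) : J a b c a (b+1) c :=
  TChain.step (P_mem.2 h) (P_mem.2 h') (by rw [dist_le_one]; simp)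
lemma s2 {a b c : ℤ} (h : Good a b c) (h' : Good a b (c+1)) : J a b c a b (c+1) :=
  TChain.step (P_mem.2 h) (P_mem.2 h') (by rw [dist_le_one]; simp)

lemma d0 {a b c : ℤ} (h : Good a b c) : J a b c (a+1+1) b c := by
  by_cases g : Good (a+1) b c
  · exact (s0 h g).trans (s0 g (by unfold Good at *; omega))
  · have g1 : Good a (b+1) c := by unfold Good at *; omega
    have g2 : Good (a+1) (b+1) c := by unfold Good at *; omega
    have g3 : Good (a+1+1) (b+1) c := by unfold Good at *; omega
    have g4 : Good (a+1+1) b c := by unfold Good at *; omega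
    exact (((s1 h g1).trans (s0 g1 g2)).trans (s0 g2 g3)).trans (s1 g4 g3).symm

lemma d1 {a b c : ℤ} (h : Good a b c) : J a b c a (b+1+1) c := by
  by_cases g : Good a (b+1) c
  · exact (s1 h g).trans (s1 g (by unfold Good at *; omega))
  · have g1 : Good (a+1) b c := by unfold Good at *; omega
    have g2 : Good (a+1) (b+1) c := by unfold Good at *; omega
    have g3 : Good (a+1) (b+1+1) c := by unfold Good at *; omega
    have g4 : Good a (b+1+1) c := by unfold Good at *; omega
    exact (((s0 h g1).trans (s1 g1 g2)).trans (s1 g2 g3)).trans (s0 g4 g3).symm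

lemma d2 {a b c : ℤ} (h : Good a b c) : J a b c a b (c+1+1) := by
  by_cases g : Good a b (c+1)
  · exact (s2 h g).trans (s2 g (by unfold Good at *; omega))
  · have g1 : Good (a+1) b c := by unfold Good at *; omega
    have g2 : Good (a+1) b (c+1) := by unfold Good at *; omega
    have g3 : Good (a+1) b (c+1+1) := by unfold Good at *; omega
    have g4 : Good a b (c+1+1) := by unfold Good at *; omega
    exact (((s0 h g1).trans (s2 g1 g2)).trans (s2 g2 g3)).trans (s0 g4 g3).symm

lemma ind {R : ℤ → Prop} (h : ∀ a, R a ↔ R (a+1+1)) (a : ℤ) : R (a % 2) ↔ R a := by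
  have key : ∀ k : ℤ, R (a % 2) ↔ R (a % 2 + 2 * k) := by
    intro k
    induction k using Int.induction_on with
    | zero => simp
    | succ k ih =>
      rw [ih, h]
      ring_nf
    | pred k ih =>
      rw [ih, h (a % 2 + 2 * (-(k:ℤ) - 1))]
      ring_nf
  rw [key (a / 2)]
  rw [Int.emod_add_mul_ediv]

lemma toBase {a b c : ℤ} (h : Good a b c) : J a b c 1 0 0 := by
  let R : ℤ → ℤ → ℤ → Prop := fun a b c => Good a b c → J a b c 1 0 0
  have r0 : ∀ b c a, R (a % 2) b c ↔ R a b c := fun b c => ind (R := fun a => R a b c) (by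
    intro a
    constructor
    · intro h g
      have g' : Good a b c := by unfold Good at *; omega
      exact (d0 g').symm.trans (h g')
    · intro h g
      exact (d0 g).trans (h (by unfold Good at *; omega)))
  have r1 : ∀ a c b, R a (b % 2) c ↔ R a b c := fun a c => ind (R := fun b => R a b c) (by
    intro b
    constructor
    · intro h g
      have g' : Good a b c := by unfold Good at *; omega
      exact (d1 g').symm.trans (h g')
    · intro h g
      exact (d1 g).trans (h (by unfold Good at *; omega)))
  have r2 : ∀ a b c, R a b (c % 2) ↔ R a b c := fun a b => ind (R := fun c => R a b c) (by
    intro c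
    constructor
    · intro h g
      have g' : Good a b c := by unfold Good at *; omega
      exact (d2 g').symm.trans (h g')
    · intro h g
      exact (d2 g).trans (h (by unfold Good at *; omega)))
  suffices R a b c from this h
  rw [← r0, ← r1, ← r2]
  have g100 : Good 1 0 0 := by unfold Good; omega
  have g110 : Good 1 1 0 := by unfold Good; omega
  have g010 : Good 0 1 0 := by unfold Good; omega
  have g011 : Good 0 1 1 := by unfold Good; omega
  have g001 : Good 0 0 1 := by unfold Good; omega
  have g101 : Good 1 0 1 := by unfold Good; omega
  have j110 : J 1 1 0 1 0 0 := (s1 (b := 0) g100 g110).symm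
  have j101 : J 1 0 1 1 0 0 := (s2 (c := 0) g100 g101).symm
  have j010 : J 0 1 0 1 0 0 := (s0 (a := 0) g010 g110).trans j110
  have j001 : J 0 0 1 1 0 0 := (s0 (a := 0) g001 g101).trans j101
  have j011 : J 0 1 1 1 0 0 := (s2 (c := 0) g010 g011).symm.trans j010
  rcases Int.emod_two_eq_zero_or_one a with ha | ha <;>
    rcases Int.emod_two_eq_zero_or_one b with hb | hb <;>
    rcases Int.emod_two_eq_zero_or_one c with hc | hc <;>
    rw [ha, hb, hc] <;> intro g <;>
    first | assumption | exact J.refl g | (exfalso; unfold Good at g; omega)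

lemma chains : ∀ x ∈ X3, ∀ x' ∈ X3, TChain X3 1 x x' := by
  intro x hx y hy
  obtain ⟨a, b, c, rfl, h⟩ := exists_P hx
  obtain ⟨a', b', c', rfl, h'⟩ := exists_P hy
  exact (toBase h).trans (toBase h').symm

/-! Affine span -/

lemma sub_mem {S : Set E} {a b c a' b' c' : ℤ} (h : P a b c ∈ S) (h' : P a' b' c' ∈ S) :
    P (a - a') (b - b') (c - c') ∈ vectorSpan ℝ S := by
  have := vsub_mem_vectorSpan ℝ h h'
  convert this using 1
  apply ext3 <;> simp

lemma span_top : affineSpan ℝ X3 = ⊤ := by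
  have g100 : P 1 0 0 ∈ X3 := P_mem.2 (by unfold Good; omega)
  have g110 : P 1 1 0 ∈ X3 := P_mem.2 (by unfold Good; omega)
  have g010 : P 0 1 0 ∈ X3 := P_mem.2 (by unfold Good; omega)
  have g101 : P 1 0 1 ∈ X3 := P_mem.2 (by unfold Good; omega)
  rw [AffineSubspace.affineSpan_eq_top_iff_vectorSpan_eq_top_of_nonempty ℝ E E ⟨_, g100⟩]
  rw [eq_top_iff]
  intro v _
  have e0 := sub_mem g110 g010
  have e1 := sub_mem g110 g100
  have e2 := sub_mem g101 g100
  have : v = v 0 • P (1-0) (1-1) (0-0) + v 1 • P (1-1) (1-0) (0-0)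
      + v 2 • P (1-1) (0-0) (1-0) := by
    apply ext3 <;> simp
  rw [this]
  exact add_mem (add_mem (Submodule.smul_mem _ _ e0) (Submodule.smul_mem _ _ e1))
    (Submodule.smul_mem _ _ e2)

/-! Rank -/

noncomputable def pr (i : Fin 3) : E →ₗ[ℝ] ℝ := (EuclideanSpace.proj i : E →L[ℝ] ℝ).toLinearMap

@[simp] lemma pr_apply (i : Fin 3) (v : E) : pr i v = v i := rfl

lemma finrank_ker (i : Fin 3) : Module.finrank ℝ (LinearMap.ker (pr i)) = 2 := by
  have h := LinearMap.finrank_range_add_finrank_ker (pr i)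
  have hs : Function.Surjective (pr i) := fun r => ⟨EuclideanSpace.single i r, by simp⟩
  rw [LinearMap.range_eq_top.2 hs, finrank_top, finrank_euclideanSpace_fin,
    Module.finrank_self] at h
  omega

lemma rank_of {x : E} (i : Fin 3) (h1 : ∀ y ∈ cluster X3 x 1, y i = x i)
    (h2 : ∀ v : E, v i = 0 → v ∈ vectorSpan ℝ (cluster X3 x 1)) : clusterRank X3 x 1 = 2 := by
  unfold clusterRank
  suffices h : vectorSpan ℝ (cluster X3 x 1) = LinearMap.ker (pr i) by
    rw [direction_affineSpan, h, finrank_ker i]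
  apply le_antisymm
  · rw [vectorSpan_def, Submodule.span_le]
    rintro _ ⟨y, hy, z, hz, rfl⟩
    simp [h1 y hy, h1 z hz]
  · intro v hv
    exact h2 v (by simpa using hv)

lemma mem_cl {a b c a' b' c' : ℤ} (h : Good a' b' c')
    (hd : (a'-a)^2+(b'-b)^2+(c'-c)^2 ≤ 1) : P a' b' c' ∈ cluster X3 (P a b c) 1 := by
  refine ⟨P_mem.2 h, ?_⟩
  rw [Metric.mem_closedBall, dist_le_one]
  simp only [P0, P1, P2]
  exact_mod_cast hd

lemma of_mem_cl {a b c : ℤ} {y : E} (h : y ∈ cluster X3 (P a b c) 1) :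
    ∃ a' b' c', y = P a' b' c' ∧ Good a' b' c' ∧
      ((a' = a ∨ a' = a + 1 ∨ a' = a - 1) ∧ b' = b ∧ c' = c ∨
       a' = a ∧ (b' = b ∨ b' = b + 1 ∨ b' = b - 1) ∧ c' = c ∨
       a' = a ∧ b' = b ∧ (c' = c ∨ c' = c + 1 ∨ c' = c - 1)) := by
  obtain ⟨a', b', c', rfl, hg⟩ := exists_P h.1
  refine ⟨a', b', c', rfl, hg, ?_⟩
  have hd := h.2
  rw [Metric.mem_closedBall, dist_le_one] at hd
  simp only [P0, P1, P2] at hd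
  norm_cast at hd
  have key : ∀ u : ℤ, u = 0 ∨ (1 ≤ u^2 ∧ (u^2 ≤ 1 → u = 1 ∨ u = -1)) := by
    intro u
    by_cases hu : u = 0
    · exact Or.inl hu
    · right
      constructor
      · have := sq_pos_of_ne_zero hu; linarith
      · intro h
        have h1 : u ≤ 1 := by nlinarith
        have h2 : -1 ≤ u := by nlinarith
        omega
  have k0 := key (a' - a)
  have k1 := key (b' - b)
  have k2 := key (c' - c)
  have q0 := sq_nonneg (a' - a)
  have q1 := sq_nonneg (b' - b)
  have q2 := sq_nonneg (c' - c)
  generalize (a' - a)^2 = A at *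
  generalize (b' - b)^2 = B at *
  generalize (c' - c)^2 = C at *
  omega

lemma ranks : ∀ x ∈ X3, clusterRank X3 x 1 = 2 := by
  intro x hx
  obtain ⟨a, b, c, rfl, h⟩ := exists_P hx
  have hc : P a b c ∈ cluster X3 (P a b c) 1 := mem_cl h (by simp)
  have hcase : (b % 2 = c % 2 ∧ a % 2 ≠ b % 2) ∨ (a % 2 = c % 2 ∧ a % 2 ≠ b % 2) ∨
    (a % 2 = b % 2 ∧ a % 2 ≠ c % 2) := by unfold Good at h; omega
  have m0 : Good (a+1) b c → P 1 0 0 ∈ vectorSpan ℝ (cluster X3 (P a b c) 1) := fun g => by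
    simpa using sub_mem (mem_cl (a := a) (b := b) (c := c) g (by simp)) hc
  have m1 : Good a (b+1) c → P 0 1 0 ∈ vectorSpan ℝ (cluster X3 (P a b c) 1) := fun g => by
    simpa using sub_mem (mem_cl (a := a) (b := b) (c := c) g (by simp)) hc
  have m2 : Good a b (c+1) → P 0 0 1 ∈ vectorSpan ℝ (cluster X3 (P a b c) 1) := fun g => by
    simpa using sub_mem (mem_cl (a := a) (b := b) (c := c) g (by simp)) hc
  rcases hcase with hh | hh | hh
  · apply rank_of 0
    · intro y hy
      obtain ⟨a', b', c', rfl, hg, hd⟩ := of_mem_cl hy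
      have : a' = a := by unfold Good at hg; omega
      simp [this]
    · intro v hv
      have : v = v 1 • P 0 1 0 + v 2 • P 0 0 1 := by apply ext3 <;> simp [hv]
      rw [this]
      exact add_mem (Submodule.smul_mem _ _ (m1 (by unfold Good; omega)))
        (Submodule.smul_mem _ _ (m2 (by unfold Good; omega)))
  · apply rank_of 1
    · intro y hy
      obtain ⟨a', b', c', rfl, hg, hd⟩ := of_mem_cl hy
      have : b' = b := by unfold Good at hg; omega
      simp [this]
    · intro v hv
      have : v = v 0 • P 1 0 0 + v 2 • P 0 0 1 := by apply ext3 <;> simp [hv]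
      rw [this]
      exact add_mem (Submodule.smul_mem _ _ (m0 (by unfold Good; omega)))
        (Submodule.smul_mem _ _ (m2 (by unfold Good; omega)))
  · apply rank_of 2
    · intro y hy
      obtain ⟨a', b', c', rfl, hg, hd⟩ := of_mem_cl hy
      have : c' = c := by unfold Good at hg; omega
      simp [this]
    · intro v hv
      have : v = v 0 • P 1 0 0 + v 1 • P 0 1 0 := by apply ext3 <;> simp [hv]
      rw [this]
      exact add_mem (Submodule.smul_mem _ _ (m0 (by unfold Good; omega)))
        (Submodule.smul_mem _ _ (m1 (by unfold Good; omega)))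

/-! Transitivity -/

def K (x y : E) : Prop := ∃ g ∈ SymX X3, g x = y

lemma K.symm {x y : E} (h : K x y) : K y x := by
  obtain ⟨g, hg, rfl⟩ := h
  refine ⟨g.symm, ?_, by simp⟩
  change g.symm '' X3 = X3
  conv_lhs => rw [← show g '' X3 = X3 from hg]
  rw [← Set.image_comp]
  simp

lemma K.trans {x y z : E} (h : K x y) (h' : K y z) : K x z := by
  obtain ⟨g, hg, rfl⟩ := h
  obtain ⟨g', hg', rfl⟩ := h'
  refine ⟨g.trans g', ?_, rfl⟩
  change (g' ∘ g) '' X3 = X3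
  rw [Set.image_comp, show g '' X3 = X3 from hg, show g' '' X3 = X3 from hg']

lemma mem_sym (g : E ≃ᵢ E) (h : ∀ x ∈ X3, g x ∈ X3) (h' : ∀ x ∈ X3, g.symm x ∈ X3) :
    g ∈ SymX X3 := by
  apply le_antisymm
  · rintro _ ⟨x, hx, rfl⟩; exact h x hx
  · intro x hx; exact ⟨g.symm x, h' x hx, by simp⟩

lemma K_translate (a b c p q r : ℤ) (h1 : p % 2 = q % 2) (h2 : q % 2 = r % 2) :
    K (P a b c) (P (a+p) (b+q) (c+r)) := by
  have key : ∀ p q r : ℤ, p % 2 = q % 2 → q % 2 = r % 2 → ∀ x ∈ X3, x + P p q r ∈ X3 := by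
    intro p q r h1 h2 x hx
    obtain ⟨a, b, c, rfl, h⟩ := exists_P hx
    have : P a b c + P p q r = P (a+p) (b+q) (c+r) := by apply ext3 <;> simp
    rw [this, P_mem]
    unfold Good at *
    omega
  refine ⟨IsometryEquiv.addRight (P p q r), mem_sym _ (key p q r h1 h2) ?_, ?_⟩
  · intro x hx
    have := key (-p) (-q) (-r) (by omega) (by omega) x hx
    convert this using 1
    apply ext3 <;> simp
  · apply ext3 <;> simp

lemma K_swap (σ : Equiv.Perm (Fin 3)) (x : E) :
    K x (LinearIsometryEquiv.piLpCongrLeft 2 ℝ ℝ σ x) := by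
  have key : ∀ σ : Equiv.Perm (Fin 3), ∀ x ∈ X3,
      LinearIsometryEquiv.piLpCongrLeft 2 ℝ ℝ σ x ∈ X3 := by
    intro σ x hx
    have hv : ∀ i, LinearIsometryEquiv.piLpCongrLeft 2 ℝ ℝ σ x i = x (σ.symm i) := by
      intro i; rfl
    have hw : ∀ i, x i = LinearIsometryEquiv.piLpCongrLeft 2 ℝ ℝ σ x (σ i) := by
      intro i; rw [hv]; simp
    refine ⟨fun i => ?_, ?_⟩
    · rw [hv]; exact hx.1 _
    · rintro (h | h)
      · exact hx.2 (Or.inl fun i => by rw [hw]; exact h _)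
      · exact hx.2 (Or.inr fun i => by rw [hw]; exact h _)
  refine ⟨(LinearIsometryEquiv.piLpCongrLeft 2 ℝ ℝ σ).toIsometryEquiv,
    mem_sym _ (key σ) ?_, rfl⟩
  intro x hx
  have := key σ.symm x hx
  rw [← LinearIsometryEquiv.piLpCongrLeft_symm] at this
  exact this

lemma K_base {a b c : ℤ} (h : Good a b c) : K (P a b c) (P 1 0 0) := by
  have hcase : (b % 2 = c % 2 ∧ a % 2 ≠ b % 2) ∨ (a % 2 = c % 2 ∧ a % 2 ≠ b % 2) ∨
    (a % 2 = b % 2 ∧ a % 2 ≠ c % 2) := by unfold Good at h; omega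
  rcases hcase with hh | hh | hh
  · simpa using K_translate a b c (1 - a) (-b) (-c) (by omega) (by omega)
  · have h1 : K (P a b c) (P 0 1 0) := by
      simpa using K_translate a b c (-a) (1-b) (-c) (by omega) (by omega)
    have h2 := K_swap (Equiv.swap 0 1) (P 0 1 0)
    refine h1.trans ?_
    convert h2 using 1
    apply ext3 <;> rfl
  · have h1 : K (P a b c) (P 0 0 1) := by
      simpa using K_translate a b c (-a) (-b) (1-c) (by omega) (by omega)
    have h2 := K_swap (Equiv.swap 0 2) (P 0 0 1)
    refine h1.trans ?_
    convert h2 using 1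
    apply ext3 <;> rfl

lemma transitive : ∀ x ∈ X3, ∀ x' ∈ X3, ∃ g ∈ SymX X3, g x = x' := by
  intro x hx y hy
  obtain ⟨a, b, c, rfl, h⟩ := exists_P hx
  obtain ⟨a', b', c', rfl, h'⟩ := exists_P hy
  exact (K_base h).trans (K_base h').symm

end X3aux

/-- `X = ℤ³ \ (2ℤ³ ∪ (2ℤ³ + (1,1,1)))` is (a) a Delone set with
parameters `r = 1/2`, `R = 1`; (b) `1`-chain connected; (c) of full affine span `ℝ³`;
(d) all its `1`-clusters have rank exactly `2`; and (e) `Sym(X)` acts transitively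
on it. -/
theorem X3_properties :
    IsDeloneSet X3 (1 / 2) 1 ∧
    (∀ x ∈ X3, ∀ x' ∈ X3, TChain X3 1 x x') ∧
    affineSpan ℝ X3 = ⊤ ∧
    (∀ x ∈ X3, clusterRank X3 x 1 = 2) ∧
    (∀ x ∈ X3, ∀ x' ∈ X3, ∃ g ∈ SymX X3, g x = x') := by
  exact ⟨X3aux.delone, X3aux.chains, X3aux.span_top, X3aux.ranks, X3aux.transitive⟩
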